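/- (Theorem 1, case of small ciphering probability.) Fix γ > 0, d_M > 0, d_K > 0 and set C = log₂(1+γ), V = 1 − (1+γ)^{−2}, ε(n, d) = Q((ln 2)·√(n/V)·(C − d/n)). Fix D_loss > 0, D_conf > 0 and α > 0, and define D(n_M, n_K) = ε(n_M, d_M)·D_loss + α·(1 − ε(n_M, d_M))·ε(n_K, d_K)·D_conf. Let 0 < a_M ≤ b_M and 0 < a_K ≤ b_K be blocklength bounds. If α·ε(a_K, d_K)·D_conf ≤ D_loss, then for all n_M ∈ [a_M, b_M] and n_K ∈ [a_K, b_K] one has D(n_M, n_K) ≤ D(a_M, a_K); that is, the maximum of D over the box is attained at (n_M^min, n_K^min). -/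

import Mathlib

/-- The Gaussian Q-function `Q(x) = (1/√(2π)) ∫_x^∞ e^{−t²/2} dt`. -/
noncomputable def gaussQ (x : ℝ) : ℝ :=
  (Real.sqrt (2 * Real.pi))⁻¹ * ∫ t in Set.Ioi x, Real.exp (-t ^ 2 / 2)

/-- Finite-blocklength error probability for SNR `γ`, payload `d`, blocklength `n`,
with capacity `C = log₂(1+γ)` and dispersion `V = 1 − (1+γ)^{−2}`. -/
noncomputable def epsFBL (γ d n : ℝ) : ℝ :=
  gaussQ (Real.log 2 * Real.sqrt (n / (1 - ((1 + γ) ^ 2)⁻¹)) *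
    (Real.logb 2 (1 + γ) - d / n))

/-- The eavesdropper's expected semantic distortion
`D(n_M, n_K) = ε(n_M,d_M)·D_loss + α·(1 − ε(n_M,d_M))·ε(n_K,d_K)·D_conf`. -/
noncomputable def deceptionDistortion (γ dM dK Dloss Dconf α nM nK : ℝ) : ℝ :=
  epsFBL γ dM nM * Dloss + α * (1 - epsFBL γ dM nM) * epsFBL γ dK nK * Dconf

theorem integrable_exp_neg_sq_div_two :
    MeasureTheory.Integrable fun t : ℝ => Real.exp (-t ^ 2 / 2) := by
  convert integrable_exp_neg_mul_sq (b := 1 / 2) (by norm_num) using 3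
  ring

theorem integral_exp_neg_sq_div_two :
    ∫ t : ℝ, Real.exp (-t ^ 2 / 2) = Real.sqrt (2 * Real.pi) := by
  convert integral_gaussian (1 / 2) using 3
  · ring_nf
  · ring

theorem gaussQ_antitone : Antitone gaussQ := fun x y hxy => by
  unfold gaussQ
  gcongr ?_ * ?_
  exact MeasureTheory.setIntegral_mono_set integrable_exp_neg_sq_div_two.integrableOn
    (.of_forall fun t => (Real.exp_pos _).le) (Set.Ioi_subset_Ioi hxy).eventuallyLE

theorem gaussQ_le_one (x : ℝ) : gaussQ x ≤ 1 := by
  have hpos : 0 < Real.sqrt (2 * Real.pi) := by positivity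
  unfold gaussQ
  rw [inv_mul_le_iff₀ hpos, mul_one, ← integral_exp_neg_sq_div_two]
  exact MeasureTheory.setIntegral_le_integral integrable_exp_neg_sq_div_two
    (.of_forall fun t => (Real.exp_pos _).le)

theorem sqrt_div_mul_sub_div_le {V C d m n : ℝ} (hV : 0 ≤ V) (hC : 0 ≤ C) (hd : 0 ≤ d)
    (hm : 0 < m) (hmn : m ≤ n) :
    Real.sqrt (m / V) * (C - d / m) ≤ Real.sqrt (n / V) * (C - d / n) := by
  have expand : ∀ x : ℝ,
      Real.sqrt (x / V) * (C - d / x) = (Real.sqrt x * C - d / Real.sqrt x) / Real.sqrt V := by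
    intro x
    rw [Real.sqrt_div' x hV]
    have hdiv : Real.sqrt x * (d / x) = d / Real.sqrt x := by
      rw [mul_div_left_comm, Real.sqrt_div_self, div_eq_mul_inv]
    rw [← hdiv]
    ring
  rw [expand m, expand n]
  have hsqrt : 0 < Real.sqrt m := Real.sqrt_pos.2 hm
  gcongr

/-- The error probability decreases with the blocklength. -/
theorem epsFBL_antitoneOn {γ d : ℝ} (hγ : 0 < γ) (hd : 0 ≤ d) :
    AntitoneOn (epsFBL γ d) (Set.Ioi 0) := by
  intro m hm n _ hmn
  apply gaussQ_antitone
  have hV : 0 ≤ 1 - ((1 + γ) ^ 2)⁻¹ :=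
    sub_nonneg.2 (inv_le_one_of_one_le₀ (one_le_pow₀ (by linarith)))
  have hC : 0 ≤ Real.logb 2 (1 + γ) := Real.logb_nonneg one_lt_two (by linarith)
  rw [mul_assoc, mul_assoc]
  exact mul_le_mul_of_nonneg_left (sqrt_div_mul_sub_div_le hV hC hd hm hmn)
    (Real.log_nonneg one_le_two)

/-- Theorem 1, case of small ciphering probability: if
`α·ε(a_K,d_K)·D_conf ≤ D_loss`, the maximum of the distortion `D` over the box
`[a_M, b_M] × [a_K, b_K]` is attained at `(n_M^min, n_K^min) = (a_M, a_K)`. -/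
theorem distortion_max_small_alpha
    (γ dM dK Dloss Dconf α aM bM aK bK : ℝ)
    (hγ : 0 < γ) (hdM : 0 < dM) (hdK : 0 < dK)
    (hDloss : 0 < Dloss) (hDconf : 0 < Dconf) (hα : 0 < α)
    (haM : 0 < aM) (hMb : aM ≤ bM) (haK : 0 < aK) (hKb : aK ≤ bK)
    (hcase : α * epsFBL γ dK aK * Dconf ≤ Dloss) :
    ∀ nM ∈ Set.Icc aM bM, ∀ nK ∈ Set.Icc aK bK,
      deceptionDistortion γ dM dK Dloss Dconf α nM nK ≤
        deceptionDistortion γ dM dK Dloss Dconf α aM aK := by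
  rintro nM ⟨hM, -⟩ nK ⟨hK, -⟩
  have hepsM : epsFBL γ dM nM ≤ epsFBL γ dM aM :=
    epsFBL_antitoneOn hγ hdM.le haM (haM.trans_le hM) hM
  have hepsK : epsFBL γ dK nK ≤ epsFBL γ dK aK :=
    epsFBL_antitoneOn hγ hdK.le haK (haK.trans_le hK) hK
  have hone : 0 ≤ 1 - epsFBL γ dM nM := sub_nonneg.2 (gaussQ_le_one _)
  calc
    deceptionDistortion γ dM dK Dloss Dconf α nM nK
        ≤ deceptionDistortion γ dM dK Dloss Dconf α nM aK := by
      unfold deceptionDistortion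
      gcongr
    _ ≤ deceptionDistortion γ dM dK Dloss Dconf α aM aK := by
      unfold deceptionDistortion
      linarith [mul_nonneg (sub_nonneg.2 hepsM) (sub_nonneg.2 hcase)]
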